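/- arXiv:2309.04913 — 2 statements merged into one kernel-verified Lean document; each statement's English description precedes it below -/
import Mathlib

section
/- Let 0 → A → E → B → 0 be a non-abelian extension of perm algebras with section ς : B → E (so π∘ς = id_B). Define b⊳a = ς(b)a, a⊲b = aς(b), and χ(b1,b2) = ς(b1)ς(b2) − ς(b1b2) (all landing in A ≅ Ker π). Then (⊳, ⊲, χ) is a non-abelian 2-cocycle on B with values in A. -/
/-- The 2-cocycle `χ(b₁,b₂) = ς(b₁)ς(b₂) − ς(b₁b₂)` attached to a section `ς` of a
non-abelian extension. -/
def extCocycle {k E B : Type*} [Field k] [AddCommGroup E] [Module k E]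
    [AddCommGroup B] [Module k B]
    (mul : E →ₗ[k] E →ₗ[k] E) (mulB : B →ₗ[k] B →ₗ[k] B) (ς : B →ₗ[k] E)
    (b1 b2 : B) : E :=
  mul (ς b1) (ς b2) - ς (mulB b1 b2)

/-!
An associative product is left-symmetric: its associator is symmetric in the first two arguments.
Each of the five cocycle identities is this symmetry for a triple of elements of `A` and of `ς(B)`,
after every product `ς(b₁)ς(b₂)` has been split as `ς(b₁b₂) + χ(b₁,b₂)`.
For three elements of `ς(B)` the left-symmetry of `B`, transported by `ς`, is subtracted.
-/

section NonabelianCocycle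

variable {R A B E : Type*} [CommRing R] [AddCommGroup A] [Module R A] [AddCommGroup B] [Module R B]
  [AddCommGroup E] [Module R E]

/-- Left-symmetry of a bilinear product, the identity of a left pre-Lie algebra; unbundled from
`LeftPreLieRing` so that it applies to a product given as a bilinear map. -/
def IsLeftSymmetric (mul : E →ₗ[R] E →ₗ[R] E) : Prop :=
  ∀ x y z, mul (mul x y) z - mul x (mul y z) = mul (mul y x) z - mul y (mul x z)

/-- A non-abelian 2-cocycle `(⊳, ⊲, χ)` on `B` with values in `A`, where `lact b a = b ⊳ a` and
`ract a b = a ⊲ b`. -/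
structure IsNonabelianCocycle (mulA : A →ₗ[R] A →ₗ[R] A) (mulB : B →ₗ[R] B →ₗ[R] B)
    (lact : B →ₗ[R] A →ₗ[R] A) (ract : A →ₗ[R] B →ₗ[R] A) (χ : B →ₗ[R] B →ₗ[R] A) : Prop where
  mul_ract (a₁ a₂ : A) (b : B) :
    ract (mulA a₁ a₂) b - ract (mulA a₂ a₁) b =
      mulA a₁ (ract a₂ b) - mulA a₂ (ract a₁ b)
  lact_mul (a₁ a₂ : A) (b : B) :
    lact b (mulA a₁ a₂) - mulA a₁ (lact b a₂) = mulA (lact b a₁ - ract a₁ b) a₂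
  lact_ract (a : A) (b₁ b₂ : B) :
    lact b₁ (ract a b₂) - ract (lact b₁ a) b₂ =
      ract a (mulB b₁ b₂) - ract (ract a b₁) b₂ + mulA a (χ b₁ b₂)
  commutator_lact (a : A) (b₁ b₂ : B) :
    lact (mulB b₁ b₂ - mulB b₂ b₁) a =
      lact b₁ (lact b₂ a) - lact b₂ (lact b₁ a) - mulA (χ b₁ b₂) a + mulA (χ b₂ b₁) a
  cocycle (b₁ b₂ b₃ : B) :
    χ (mulB b₁ b₂) b₃ - χ b₁ (mulB b₂ b₃) - χ (mulB b₂ b₁) b₃ + χ b₂ (mulB b₁ b₃) =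
      lact b₁ (χ b₂ b₃) - lact b₂ (χ b₁ b₃) - ract (χ b₁ b₂) b₃ + ract (χ b₂ b₁) b₃

/-- The factor set `χ(b₁, b₂) = ς(b₁)ς(b₂) - ς(b₁b₂)` of a linear map `ς`, as a bilinear map over
any commutative ring; over a field its values are those of `extCocycle` by definition. -/
def factorSet (mul : E →ₗ[R] E →ₗ[R] E) (mulB : B →ₗ[R] B →ₗ[R] B) (ς : B →ₗ[R] E) :
    B →ₗ[R] B →ₗ[R] E :=
  mul.compl₁₂ ς ς - mulB.compr₂ ς

variable {mul : E →ₗ[R] E →ₗ[R] E} {mulB : B →ₗ[R] B →ₗ[R] B}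

@[simp]
theorem factorSet_apply (ς : B →ₗ[R] E) (b₁ b₂ : B) :
    factorSet mul mulB ς b₁ b₂ = mul (ς b₁) (ς b₂) - ς (mulB b₁ b₂) :=
  rfl

theorem factorSet_mem_ker {π : E →ₗ[R] B} (hπ : ∀ x y, π (mul x y) = mulB (π x) (π y))
    {ς : B →ₗ[R] E} (hς : Function.RightInverse ς π) (b₁ b₂ : B) :
    factorSet mul mulB ς b₁ b₂ ∈ LinearMap.ker π := by
  simp [hπ, hς _]

namespace IsLeftSymmetric

theorem of_assoc (h : ∀ x y z, mul (mul x y) z = mul x (mul y z)) : IsLeftSymmetric mul :=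
  fun x y z => by rw [h x, h y, sub_self, sub_self]

theorem of_surjective (hE : IsLeftSymmetric mul) {π : E →ₗ[R] B}
    (hπ : ∀ x y, π (mul x y) = mulB (π x) (π y)) (hsurj : Function.Surjective π) :
    IsLeftSymmetric mulB :=
  hsurj.forall₃.2 fun x y z => by simpa only [map_sub, hπ] using congrArg π (hE x y z)

theorem isNonabelianCocycle (hE : IsLeftSymmetric mul) (hB : IsLeftSymmetric mulB)
    (ς : B →ₗ[R] E) :
    IsNonabelianCocycle mul mulB (mul ∘ₗ ς) (mul.compl₂ ς) (factorSet mul mulB ς) where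
  mul_ract a₁ a₂ b := by
    simp only [LinearMap.compl₂_apply]
    linear_combination (norm := module) hE a₁ a₂ (ς b)
  lact_mul a₁ a₂ b := by
    simp only [LinearMap.comp_apply, LinearMap.compl₂_apply, map_sub, LinearMap.sub_apply]
    linear_combination (norm := module) hE a₁ (ς b) a₂
  lact_ract a b₁ b₂ := by
    simp only [LinearMap.comp_apply, LinearMap.compl₂_apply, factorSet_apply, map_sub]
    linear_combination (norm := module) hE a (ς b₁) (ς b₂)
  commutator_lact a b₁ b₂ := by
    simp only [LinearMap.comp_apply, factorSet_apply, map_sub, LinearMap.sub_apply]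
    linear_combination (norm := module) hE (ς b₁) (ς b₂) a
  cocycle b₁ b₂ b₃ := by
    have hςB := congrArg ς (hB b₁ b₂ b₃)
    simp only [LinearMap.comp_apply, LinearMap.compl₂_apply, factorSet_apply, map_sub,
      LinearMap.sub_apply] at hςB ⊢
    linear_combination (norm := module) hE (ς b₁) (ς b₂) (ς b₃) - hςB

end IsLeftSymmetric

/-- The coefficient algebra is all of `E`; by the first conjunct the cocycle restricts to the
kernel ideal `A = ker π`. -/
theorem section_gives_nonabelian_cocycle_general (hE : IsLeftSymmetric mul) {π : E →ₗ[R] B}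
    (hπ : ∀ x y, π (mul x y) = mulB (π x) (π y)) {ς : B →ₗ[R] E}
    (hς : Function.RightInverse ς π) :
    ((∀ b, ∀ a ∈ LinearMap.ker π,
        mul (ς b) a ∈ LinearMap.ker π ∧ mul a (ς b) ∈ LinearMap.ker π) ∧
      ∀ b₁ b₂, factorSet mul mulB ς b₁ b₂ ∈ LinearMap.ker π) ∧
    IsNonabelianCocycle mul mulB (mul ∘ₗ ς) (mul.compl₂ ς) (factorSet mul mulB ς) := by
  refine ⟨⟨fun b a ha => ?_, factorSet_mem_ker hπ hς⟩,
    hE.isNonabelianCocycle (hE.of_surjective hπ hς.surjective) ς⟩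
  rw [LinearMap.mem_ker] at ha
  simp [hπ, ha]

end NonabelianCocycle

/-- Let `0 → A → E → B → 0` be a non-abelian extension of perm algebras (with `A = ker π`)
and `ς` a section of `π`.  Define `b⊳a = ς(b)a`, `a⊲b = aς(b)` and
`χ(b₁,b₂) = ς(b₁)ς(b₂) − ς(b₁b₂)`.  Then these maps take values in `A`, and `(⊳, ⊲, χ)`
is a non-abelian 2-cocycle on `B` with values in `A`. -/
theorem section_gives_nonabelian_cocycle {k E B : Type*} [Field k]
    [AddCommGroup E] [Module k E] [AddCommGroup B] [Module k B]
    (mul : E →ₗ[k] E →ₗ[k] E)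
    (hp1 : ∀ x y z, mul (mul x y) z = mul x (mul y z))
    (hp2 : ∀ x y z, mul x (mul y z) = mul x (mul z y))
    (mulB : B →ₗ[k] B →ₗ[k] B)
    (hpB1 : ∀ x y z, mulB (mulB x y) z = mulB x (mulB y z))
    (hpB2 : ∀ x y z, mulB x (mulB y z) = mulB x (mulB z y))
    (π : E →ₗ[k] B)
    (hπ : ∀ x y : E, π (mul x y) = mulB (π x) (π y))
    (hsurj : Function.Surjective π)
    (ς : B →ₗ[k] E)
    (hς : ∀ b : B, π (ς b) = b) :
    -- the maps take values in A = ker π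
    ((∀ (b : B) (a : E), π a = 0 → π (mul (ς b) a) = 0 ∧ π (mul a (ς b)) = 0) ∧
     (∀ b1 b2 : B, π (extCocycle mul mulB ς b1 b2) = 0)) ∧
    -- cocycle condition 1
    (∀ (a1 a2 : E) (b : B), π a1 = 0 → π a2 = 0 →
      mul (mul a1 a2) (ς b) - mul (mul a2 a1) (ς b) =
        mul a1 (mul a2 (ς b)) - mul a2 (mul a1 (ς b))) ∧
    -- cocycle condition 2
    (∀ (a1 a2 : E) (b : B), π a1 = 0 → π a2 = 0 →
      mul (ς b) (mul a1 a2) - mul a1 (mul (ς b) a2) =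
        mul (mul (ς b) a1 - mul a1 (ς b)) a2) ∧
    -- cocycle condition 3
    (∀ (a : E) (b1 b2 : B), π a = 0 →
      mul (ς b1) (mul a (ς b2)) - mul (mul (ς b1) a) (ς b2) =
        mul a (ς (mulB b1 b2)) - mul (mul a (ς b1)) (ς b2) +
          mul a (extCocycle mul mulB ς b1 b2)) ∧
    -- cocycle condition 4
    (∀ (a : E) (b1 b2 : B), π a = 0 →
      mul (ς (mulB b1 b2 - mulB b2 b1)) a =
        mul (ς b1) (mul (ς b2) a) - mul (ς b2) (mul (ς b1) a) -
          mul (extCocycle mul mulB ς b1 b2) a + mul (extCocycle mul mulB ς b2 b1) a) ∧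
    -- cocycle condition 5
    (∀ b1 b2 b3 : B,
      extCocycle mul mulB ς (mulB b1 b2) b3 - extCocycle mul mulB ς b1 (mulB b2 b3) -
          extCocycle mul mulB ς (mulB b2 b1) b3 + extCocycle mul mulB ς b2 (mulB b1 b3) =
        mul (ς b1) (extCocycle mul mulB ς b2 b3) -
          mul (ς b2) (extCocycle mul mulB ς b1 b3) -
          mul (extCocycle mul mulB ς b1 b2) (ς b3) +
          mul (extCocycle mul mulB ς b2 b1) (ς b3)) := by
  obtain ⟨hker, h⟩ := section_gives_nonabelian_cocycle_general (.of_assoc hp1) hπ hς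
  exact ⟨hker, fun a₁ a₂ b _ _ => h.mul_ract a₁ a₂ b, fun a₁ a₂ b _ _ => h.lact_mul a₁ a₂ b,
    fun a b₁ b₂ _ => h.lact_ract a b₁ b₂, fun a b₁ b₂ _ => h.commutator_lact a b₁ b₂, h.cocycle⟩
end

section
/- Let A be a finite-dimensional perm algebra and let R ∈ A ⊗ A be symmetric (τR = R) and nondegenerate, with associated linear isomorphism R# : A* → A defined by ⟨R#(u1), u2⟩ = ⟨R, u1 ⊗ u2⟩. Then R satisfies the S-equation R13R12 − R13R23 + R23R12 − R12R23 = 0 if and only if the bilinear form ω̄(a1, a2) = ⟨a1, (R#)^{-1}(a2)⟩ on A satisfies ω̄(a1a2, a3) + ω̄(a1a3, a2) = ω̄(a3a2, a1) + ω̄(a3a1, a2) for all a1, a2, a3 ∈ A. -/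
/-!
An element of `A ⊗ A ⊗ A` vanishes iff all triples of functionals `u ⊗ v ⊗ w` vanish on it.
Evaluating such a triple on one of the four products in `P(R)` gives one functional applied to a
product of two contractions of `R`; for symmetric `R` every such contraction is a value of `R♯`.
So the S-equation is an identity in `R♯ u`, `R♯ v`, `R♯ w` for all `u, v, w`, and the substitution
`a₁ = R♯ u`, `a₂ = R♯ v`, `a₃ = R♯ w`, which is bijective, turns it into the identity for `ω̄`.
-/

open TensorProduct

/-- For `R = Σᵢ aᵢ ⊗ āᵢ ∈ A ⊗ A`, the element
`P(R) = R₁₃R₁₂ − R₁₃R₂₃ + R₂₃R₁₂ − R₁₂R₂₃ ∈ A ⊗ A ⊗ A`; the S-equation is `P(R) = 0`.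
Explicitly `R₁₃R₁₂ = Σ aᵢaⱼ ⊗ āⱼ ⊗ āᵢ`, `R₁₃R₂₃ = Σ aᵢ ⊗ aⱼ ⊗ āᵢāⱼ`,
`R₂₃R₁₂ = Σ aⱼ ⊗ aᵢāⱼ ⊗ āᵢ`, `R₁₂R₂₃ = Σ aᵢ ⊗ āᵢaⱼ ⊗ āⱼ`. -/
noncomputable def sTensor {k A : Type*} [Field k] [AddCommGroup A] [Module k A]
    (mul : A →ₗ[k] A →ₗ[k] A) (R : A ⊗[k] A) : A ⊗[k] (A ⊗[k] A) :=
  let M : A ⊗[k] A →ₗ[k] A := TensorProduct.lift mul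
  let X : (A ⊗[k] A) ⊗[k] (A ⊗[k] A) := R ⊗ₜ[k] R
  let Y := (TensorProduct.tensorTensorTensorComm k A A A A) X
  -- R₁₃R₁₂
  (TensorProduct.map M LinearMap.id)
      ((TensorProduct.map LinearMap.id (TensorProduct.comm k A A).toLinearMap) Y)
  -- − R₁₃R₂₃
  - (TensorProduct.assoc k A A A) ((TensorProduct.map LinearMap.id M) Y)
  -- + R₂₃R₁₂
  + (TensorProduct.map LinearMap.id (TensorProduct.map M LinearMap.id))
      ((TensorProduct.map LinearMap.id (TensorProduct.assoc k A A A).symm.toLinearMap)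
        ((TensorProduct.assoc k A A (A ⊗[k] A))
          ((TensorProduct.tensorTensorTensorComm k A A A A)
            ((TensorProduct.comm k (A ⊗[k] A) (A ⊗[k] A)) X))))
  -- − R₁₂R₂₃
  - (TensorProduct.map LinearMap.id (TensorProduct.map M LinearMap.id))
      ((TensorProduct.map LinearMap.id (TensorProduct.assoc k A A A).symm.toLinearMap)
        ((TensorProduct.assoc k A A (A ⊗[k] A)) X))

/-- The linear map `R♯ : A* → A` attached to `R ∈ A ⊗ A`, determined by
`⟨R♯(u₁), u₂⟩ = ⟨R, u₁ ⊗ u₂⟩`. -/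
noncomputable def rSharp {k A : Type*} [Field k] [AddCommGroup A] [Module k A]
    (R : A ⊗[k] A) : Module.Dual k A → A :=
  fun u => (TensorProduct.lid k A) ((TensorProduct.map u LinearMap.id) R)

section Slices

variable {R M N P : Type*} [CommSemiring R] [AddCommMonoid M] [Module R M]
  [AddCommMonoid N] [Module R N] [AddCommMonoid P] [Module R P]

/-- The left slice map `f ⊗ id : M ⊗ N → N` of a functional `f` on `M`. It extends `rSharp`,
which is its case `M = N` over a field, read as a function of `f`. -/
noncomputable def leftSlice (f : Module.Dual R M) : M ⊗[R] N →ₗ[R] N :=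
  (TensorProduct.lid R N).toLinearMap ∘ₗ TensorProduct.map f LinearMap.id

/-- The right slice map `id ⊗ g : M ⊗ N → M` of a functional `g` on `N`. -/
noncomputable def rightSlice (g : Module.Dual R N) : M ⊗[R] N →ₗ[R] M :=
  (TensorProduct.rid R M).toLinearMap ∘ₗ TensorProduct.map LinearMap.id g

@[simp]
theorem leftSlice_tmul (f : Module.Dual R M) (m : M) (n : N) :
    leftSlice f (m ⊗ₜ[R] n) = f m • n := by
  simp [leftSlice]

@[simp]
theorem rightSlice_tmul (g : Module.Dual R N) (m : M) (n : N) :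
    rightSlice g (m ⊗ₜ[R] n) = g n • m := by
  simp [rightSlice]

theorem leftSlice_comm (g : Module.Dual R N) (x : M ⊗[R] N) :
    leftSlice g (TensorProduct.comm R M N x) = rightSlice g x := by
  induction x with
  | zero => simp
  | tmul m n => simp
  | add x y hx hy => simp only [map_add, hx, hy]

theorem forall_leftSlice_eq_zero_iff [Module.Projective R M] (x : M ⊗[R] N) :
    (∀ f : Module.Dual R M, leftSlice f x = 0) ↔ x = 0 := by
  refine ⟨fun h ↦ ?_, fun hx f ↦ by rw [hx, map_zero]⟩
  classical
  obtain ⟨s, hs⟩ := Module.projective_def'.mp ‹Module.Projective R M›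
  have s_injective : Function.Injective (s.rTensor N) := by
    refine Function.LeftInverse.injective (g := (Finsupp.linearCombination R id).rTensor N) ?_
    intro y
    rw [← LinearMap.rTensor_comp_apply, hs, LinearMap.rTensor_id_apply]
  have coord_eq_zero : TensorProduct.finsuppScalarLeft R N M (s.rTensor N x) = 0 := by
    ext m
    rw [TensorProduct.finsuppScalarLeft_apply, ← LinearMap.rTensor_comp_apply]
    exact h (Finsupp.lapply m ∘ₗ s)
  apply s_injective
  rwa [map_zero, ← LinearEquiv.map_eq_zero_iff (TensorProduct.finsuppScalarLeft R N M)]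

/-- The functional `u ⊗ v ⊗ w` on `M ⊗ (N ⊗ P)`, encoded by contracting one tensor factor
at a time. -/
noncomputable def tripleEval (u : Module.Dual R M) (v : Module.Dual R N) (w : Module.Dual R P) :
    Module.Dual R (M ⊗[R] (N ⊗[R] P)) :=
  w ∘ₗ leftSlice v ∘ₗ leftSlice u

@[simp]
theorem tripleEval_tmul (u : Module.Dual R M) (v : Module.Dual R N) (w : Module.Dual R P)
    (m : M) (n : N) (p : P) :
    tripleEval u v w (m ⊗ₜ[R] (n ⊗ₜ[R] p)) = u m * (v n * w p) := by
  simp [tripleEval]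

theorem forall_tripleEval_eq_zero_iff [Module.Projective R M] [Module.Projective R N]
    [Module.Projective R P] (x : M ⊗[R] (N ⊗[R] P)) :
    (∀ u v w, tripleEval u v w x = 0) ↔ x = 0 := by
  simp only [tripleEval, LinearMap.comp_apply, Module.forall_dual_apply_eq_zero_iff,
    forall_leftSlice_eq_zero_iff]

end Slices

section LegProducts

variable {R A : Type*} [CommSemiring R] [AddCommMonoid A] [Module R A]

/-- The product `(S, T) ↦ S₁₃T₁₂`, that is, `(a ⊗ b) ⊗ (c ⊗ d) ↦ ac ⊗ d ⊗ b`, as a linear map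
on `(A ⊗ A) ⊗ (A ⊗ A)`. -/
noncomputable def legMul₁₃₁₂ (mul : A →ₗ[R] A →ₗ[R] A) :
    (A ⊗[R] A) ⊗[R] (A ⊗[R] A) →ₗ[R] A ⊗[R] (A ⊗[R] A) :=
  TensorProduct.map (TensorProduct.lift mul) LinearMap.id ∘ₗ
    TensorProduct.map LinearMap.id (TensorProduct.comm R A A).toLinearMap ∘ₗ
    (TensorProduct.tensorTensorTensorComm R A A A A).toLinearMap

@[simp]
theorem legMul₁₃₁₂_tmul (mul : A →ₗ[R] A →ₗ[R] A) (a b c d : A) :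
    legMul₁₃₁₂ mul ((a ⊗ₜ[R] b) ⊗ₜ[R] (c ⊗ₜ[R] d)) = mul a c ⊗ₜ[R] (d ⊗ₜ[R] b) :=
  rfl

/-- The product `(S, T) ↦ S₁₃T₂₃`, that is, `(a ⊗ b) ⊗ (c ⊗ d) ↦ a ⊗ c ⊗ bd`, as a linear map
on `(A ⊗ A) ⊗ (A ⊗ A)`. -/
noncomputable def legMul₁₃₂₃ (mul : A →ₗ[R] A →ₗ[R] A) :
    (A ⊗[R] A) ⊗[R] (A ⊗[R] A) →ₗ[R] A ⊗[R] (A ⊗[R] A) :=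
  (TensorProduct.assoc R A A A).toLinearMap ∘ₗ
    TensorProduct.map LinearMap.id (TensorProduct.lift mul) ∘ₗ
    (TensorProduct.tensorTensorTensorComm R A A A A).toLinearMap

@[simp]
theorem legMul₁₃₂₃_tmul (mul : A →ₗ[R] A →ₗ[R] A) (a b c d : A) :
    legMul₁₃₂₃ mul ((a ⊗ₜ[R] b) ⊗ₜ[R] (c ⊗ₜ[R] d)) = a ⊗ₜ[R] (c ⊗ₜ[R] mul b d) :=
  rfl

/-- The product `(S, T) ↦ S₁₂T₂₃`, that is, `(a ⊗ b) ⊗ (c ⊗ d) ↦ a ⊗ bc ⊗ d`, as a linear map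
on `(A ⊗ A) ⊗ (A ⊗ A)`. -/
noncomputable def legMul₁₂₂₃ (mul : A →ₗ[R] A →ₗ[R] A) :
    (A ⊗[R] A) ⊗[R] (A ⊗[R] A) →ₗ[R] A ⊗[R] (A ⊗[R] A) :=
  TensorProduct.map LinearMap.id (TensorProduct.map (TensorProduct.lift mul) LinearMap.id) ∘ₗ
    TensorProduct.map LinearMap.id (TensorProduct.assoc R A A A).symm.toLinearMap ∘ₗ
    (TensorProduct.assoc R A A (A ⊗[R] A)).toLinearMap

@[simp]
theorem legMul₁₂₂₃_tmul (mul : A →ₗ[R] A →ₗ[R] A) (a b c d : A) :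
    legMul₁₂₂₃ mul ((a ⊗ₜ[R] b) ⊗ₜ[R] (c ⊗ₜ[R] d)) = a ⊗ₜ[R] (mul b c ⊗ₜ[R] d) :=
  rfl

/-- The product `(S, T) ↦ S₂₃T₁₂`, that is, `(a ⊗ b) ⊗ (c ⊗ d) ↦ c ⊗ ad ⊗ b`, as a linear map
on `(A ⊗ A) ⊗ (A ⊗ A)`. -/
noncomputable def legMul₂₃₁₂ (mul : A →ₗ[R] A →ₗ[R] A) :
    (A ⊗[R] A) ⊗[R] (A ⊗[R] A) →ₗ[R] A ⊗[R] (A ⊗[R] A) :=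
  legMul₁₂₂₃ mul ∘ₗ (TensorProduct.tensorTensorTensorComm R A A A A).toLinearMap ∘ₗ
    (TensorProduct.comm R (A ⊗[R] A) (A ⊗[R] A)).toLinearMap

@[simp]
theorem legMul₂₃₁₂_tmul (mul : A →ₗ[R] A →ₗ[R] A) (a b c d : A) :
    legMul₂₃₁₂ mul ((a ⊗ₜ[R] b) ⊗ₜ[R] (c ⊗ₜ[R] d)) = c ⊗ₜ[R] (mul a d ⊗ₜ[R] b) :=
  rfl

variable (mul : A →ₗ[R] A →ₗ[R] A) (u v w : Module.Dual R A) (S T : A ⊗[R] A)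

theorem tripleEval_legMul₁₃₁₂ :
    tripleEval u v w (legMul₁₃₁₂ mul (S ⊗ₜ[R] T)) =
      u (mul (rightSlice w S) (rightSlice v T)) := by
  have maps_eq : tripleEval u v w ∘ₗ legMul₁₃₁₂ mul =
      u ∘ₗ TensorProduct.lift mul ∘ₗ TensorProduct.map (rightSlice w) (rightSlice v) := by
    ext a b c d
    simp [mul_comm, mul_assoc]
  simpa using LinearMap.congr_fun maps_eq (S ⊗ₜ[R] T)

theorem tripleEval_legMul₁₃₂₃ :
    tripleEval u v w (legMul₁₃₂₃ mul (S ⊗ₜ[R] T)) =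
      w (mul (leftSlice u S) (leftSlice v T)) := by
  have maps_eq : tripleEval u v w ∘ₗ legMul₁₃₂₃ mul =
      w ∘ₗ TensorProduct.lift mul ∘ₗ TensorProduct.map (leftSlice u) (leftSlice v) := by
    ext a b c d
    simp [mul_left_comm]
  simpa using LinearMap.congr_fun maps_eq (S ⊗ₜ[R] T)

theorem tripleEval_legMul₁₂₂₃ :
    tripleEval u v w (legMul₁₂₂₃ mul (S ⊗ₜ[R] T)) =
      v (mul (leftSlice u S) (rightSlice w T)) := by
  have maps_eq : tripleEval u v w ∘ₗ legMul₁₂₂₃ mul =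
      v ∘ₗ TensorProduct.lift mul ∘ₗ TensorProduct.map (leftSlice u) (rightSlice w) := by
    ext a b c d
    simp [mul_comm, mul_left_comm]
  simpa using LinearMap.congr_fun maps_eq (S ⊗ₜ[R] T)

theorem tripleEval_legMul₂₃₁₂ :
    tripleEval u v w (legMul₂₃₁₂ mul (S ⊗ₜ[R] T)) =
      v (mul (rightSlice w S) (leftSlice u T)) := by
  have maps_eq : tripleEval u v w ∘ₗ legMul₂₃₁₂ mul =
      v ∘ₗ TensorProduct.lift mul ∘ₗ TensorProduct.map (rightSlice w) (leftSlice u) := by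
    ext a b c d
    simp [mul_comm]
  simpa using LinearMap.congr_fun maps_eq (S ⊗ₜ[R] T)

end LegProducts

section SEquation

variable {k A : Type*} [Field k] [AddCommGroup A] [Module k A]

theorem sTensor_eq_legMul (mul : A →ₗ[k] A →ₗ[k] A) (R : A ⊗[k] A) :
    sTensor mul R = legMul₁₃₁₂ mul (R ⊗ₜ[k] R) - legMul₁₃₂₃ mul (R ⊗ₜ[k] R) +
      legMul₂₃₁₂ mul (R ⊗ₜ[k] R) - legMul₁₂₂₃ mul (R ⊗ₜ[k] R) :=
  rfl

theorem leftSlice_eq_rSharp (R : A ⊗[k] A) (u : Module.Dual k A) : leftSlice u R = rSharp R u :=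
  rfl

theorem rightSlice_eq_rSharp_of_comm_eq {R : A ⊗[k] A} (hsym : TensorProduct.comm k A A R = R)
    (u : Module.Dual k A) : rightSlice u R = rSharp R u := by
  rw [← leftSlice_comm, hsym, leftSlice_eq_rSharp]

theorem tripleEval_sTensor (mul : A →ₗ[k] A →ₗ[k] A) {R : A ⊗[k] A}
    (hsym : TensorProduct.comm k A A R = R) (u v w : Module.Dual k A) :
    tripleEval u v w (sTensor mul R) =
      u (mul (rSharp R w) (rSharp R v)) - w (mul (rSharp R u) (rSharp R v)) +
        v (mul (rSharp R w) (rSharp R u)) - v (mul (rSharp R u) (rSharp R w)) := by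
  simp only [sTensor_eq_legMul, map_sub, map_add, tripleEval_legMul₁₃₁₂, tripleEval_legMul₁₃₂₃,
    tripleEval_legMul₂₃₁₂, tripleEval_legMul₁₂₂₃, leftSlice_eq_rSharp,
    rightSlice_eq_rSharp_of_comm_eq hsym]

theorem sTensor_eq_zero_iff_rSharp (mul : A →ₗ[k] A →ₗ[k] A) {R : A ⊗[k] A}
    (hsym : TensorProduct.comm k A A R = R) :
    sTensor mul R = 0 ↔ ∀ u v w : Module.Dual k A,
      w (mul (rSharp R u) (rSharp R v)) + v (mul (rSharp R u) (rSharp R w)) =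
        u (mul (rSharp R w) (rSharp R v)) + v (mul (rSharp R w) (rSharp R u)) := by
  rw [← forall_tripleEval_eq_zero_iff]
  refine forall₃_congr fun u v w ↦ ?_
  rw [tripleEval_sTensor mul hsym]
  constructor <;> intro h <;> linear_combination -h

theorem sEquation_iff_form_general (mul : A →ₗ[k] A →ₗ[k] A) (R : A ⊗[k] A)
    (hsym : TensorProduct.comm k A A R = R) (hnd : Function.Bijective (rSharp R)) :
    sTensor mul R = 0 ↔
      ∀ a1 a2 a3 : A,
        Function.invFun (rSharp R) a3 (mul a1 a2) + Function.invFun (rSharp R) a2 (mul a1 a3) =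
          Function.invFun (rSharp R) a1 (mul a3 a2) +
            Function.invFun (rSharp R) a2 (mul a3 a1) := by
  have invFun_rSharp := Function.leftInverse_invFun hnd.injective
  simp only [sTensor_eq_zero_iff_rSharp mul hsym, hnd.surjective.forall, invFun_rSharp _]

end SEquation

/-- For a nondegenerate symmetric `R ∈ A ⊗ A` over a finite-dimensional perm algebra `A`,
`R` satisfies the S-equation if and only if the bilinear form
`ω̄(a₁,a₂) = ⟨a₁, (R♯)⁻¹(a₂)⟩` satisfies
`ω̄(a₁a₂,a₃) + ω̄(a₁a₃,a₂) = ω̄(a₃a₂,a₁) + ω̄(a₃a₁,a₂)`. -/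
theorem sEquation_iff_form {k A : Type*} [Field k] [AddCommGroup A] [Module k A]
    [FiniteDimensional k A]
    (mul : A →ₗ[k] A →ₗ[k] A)
    (hp1 : ∀ x y z, mul (mul x y) z = mul x (mul y z))
    (hp2 : ∀ x y z, mul x (mul y z) = mul x (mul z y))
    (R : A ⊗[k] A)
    (hsym : (TensorProduct.comm k A A) R = R)
    (hnd : Function.Bijective (rSharp R)) :
    sTensor mul R = 0
    ↔
    (∀ a1 a2 a3 : A,
      (Function.invFun (rSharp R) a3) (mul a1 a2) +
          (Function.invFun (rSharp R) a2) (mul a1 a3) =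
        (Function.invFun (rSharp R) a1) (mul a3 a2) +
          (Function.invFun (rSharp R) a2) (mul a3 a1)) :=
  sEquation_iff_form_general mul R hsym hnd
end
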